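/- In the super-exponentially sparse model with decaying couplings described below, for every φ ∈ (0, π), λ = 2 cos φ, and every ω ∈ Λ: limsup_{l→∞} (1/l²) · Σ_{n=0}^{l} ‖T(n; λ)‖² < ∞. -/

import Mathlib

/-!
Write `s_k = a_k + ω_k` for the perturbed sites and `x_n, y_n` for the entries `T(n)₀ⱼ`, `p_n T(n)₁ⱼ`
of a fixed column. One step reads `(x, y) ↦ ((λ x - y) / p, p x)`, that is, the free step
`(x, y) ↦ (λ x - y, x)` followed by `diag (1 / p, p)`. The free step preserves the quadratic form
`Q(x, y) = x² + y² - λ x y`, which is comparable to `x² + y²` because `|λ| < 2`. Hence `Q` is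
constant between sites and grows at most by a factor `K / q_k²`, with `K` depending only on `λ`, at the
site `s_k`, so that for `s_k ≤ n < s_{k+1}`
`Q(x_n, y_n) ≤ K ^ k ∏_{i ≤ k} q_i⁻² ≤ K ^ k exp (c k ^ γ - c₂ k ^ δ)`.
As `δ > 1`, the factor `K ^ k exp (-c₂ k ^ δ)` is bounded in `k`, while
`exp (c k ^ γ) ≤ 4 s_k ≤ 4 n` by sparseness. So `Q`, and with it `‖T(n)‖²`, is `O(n + 1)`, and the sum
up to `l` is `O(l²)`.
-/

open MeasureTheory Real Filter

/-- The operator (spectral) norm of a 2×2 real matrix. -/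
noncomputable def opNorm (M : Matrix (Fin 2) (Fin 2) ℝ) : ℝ :=
  ‖Matrix.toEuclideanCLM (𝕜 := ℝ) (n := Fin 2) M‖

/-- The super-exponentially sparse positions: `a₀ = 0`, `a_n = a_{n-1} + ⌊e^{c n^γ}⌋`. -/
noncomputable def aseqG (c γ : ℝ) : ℕ → ℕ
  | 0 => 0
  | (n + 1) => aseqG c γ n + ⌊Real.exp (c * ((n + 1 : ℕ) : ℝ) ^ γ)⌋₊

-- The coupling `p_n`: `p_n = q_k` if `n = a_k + ω_k` for some `k ≥ 1`, else `1`.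
open Classical in
noncomputable def pcoefQ (q : ℕ → ℝ) (c γ : ℝ) (ω : ℕ → ℤ) (n : ℤ) : ℝ :=
  if h : ∃ j : ℕ, 1 ≤ j ∧ n = (aseqG c γ j : ℤ) + ω j then q h.choose else 1

/-- The one-step transfer matrix `T(n, n-1; λ) = [[λ/p_n, -p_{n-1}/p_n], [1, 0]]`. -/
noncomputable def TstepQ (q : ℕ → ℝ) (c γ : ℝ) (ω : ℕ → ℤ) (lam : ℝ) (n : ℕ) :
    Matrix (Fin 2) (Fin 2) ℝ :=
  !![lam / pcoefQ q c γ ω n, -pcoefQ q c γ ω ((n : ℤ) - 1) / pcoefQ q c γ ω n; 1, 0]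

/-- The product `T(n; λ) = T(n, n-1; λ) ⋯ T(0, -1; λ)`. -/
noncomputable def TmatQ (q : ℕ → ℝ) (c γ : ℝ) (ω : ℕ → ℤ) (lam : ℝ) :
    ℕ → Matrix (Fin 2) (Fin 2) ℝ
  | 0 => TstepQ q c γ ω lam 0
  | (n + 1) => TstepQ q c γ ω lam (n + 1) * TmatQ q c γ ω lam n

/-- The operator norm is at most the Frobenius norm. -/
lemma opNorm_sq_le (M : Matrix (Fin 2) (Fin 2) ℝ) :
    opNorm M ^ 2 ≤ M 0 0 ^ 2 + M 0 1 ^ 2 + M 1 0 ^ 2 + M 1 1 ^ 2 := by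
  have hF : 0 ≤ M 0 0 ^ 2 + M 0 1 ^ 2 + M 1 0 ^ 2 + M 1 1 ^ 2 := by positivity
  have h : opNorm M ≤ √(M 0 0 ^ 2 + M 0 1 ^ 2 + M 1 0 ^ 2 + M 1 1 ^ 2) := by
    unfold opNorm
    refine ContinuousLinearMap.opNorm_le_bound _ (Real.sqrt_nonneg _) fun v => ?_
    rw [EuclideanSpace.norm_eq, EuclideanSpace.norm_eq, ← Real.sqrt_mul hF]
    apply Real.sqrt_le_sqrt
    simp only [Fin.sum_univ_two, Real.norm_eq_abs, sq_abs, Matrix.ofLp_toEuclideanCLM,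
      Matrix.mulVec, dotProduct]
    nlinarith [sq_nonneg (M 0 0 * v 1 - M 0 1 * v 0), sq_nonneg (M 1 0 * v 1 - M 1 1 * v 0)]
  have h0 : 0 ≤ opNorm M := norm_nonneg _
  calc opNorm M ^ 2 ≤ √(M 0 0 ^ 2 + M 0 1 ^ 2 + M 1 0 ^ 2 + M 1 1 ^ 2) ^ 2 := by gcongr
    _ = _ := Real.sq_sqrt hF

/-- Since `δ > 1`, the factor `exp (-c₂ k ^ δ)` beats every geometric growth `K ^ k`. -/
lemma pow_mul_exp_bounded (K c₂ δ : ℝ) (hK : 1 ≤ K) (hc2 : 0 < c₂) (hδ : 1 < δ) :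
    ∃ M : ℝ, 1 ≤ M ∧ ∀ k : ℕ, 1 ≤ k → K ^ k * Real.exp (-(c₂ * (k : ℝ) ^ δ)) ≤ M := by
  have hL : 0 ≤ Real.log K := Real.log_nonneg hK
  -- Beyond this threshold `R` the inequality `log K ≤ c₂ k ^ (δ - 1)` holds.
  set R : ℝ := (Real.log K / c₂) ^ (1 / (δ - 1)) with hR
  have hR0 : 0 ≤ R := by positivity
  refine ⟨Real.exp (R * Real.log K), Real.one_le_exp (by positivity), fun k hk => ?_⟩
  have hk0 : (0 : ℝ) < k := by exact_mod_cast hk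
  have e1 : K ^ k = Real.exp (k * Real.log K) := by
    rw [mul_comm, Real.exp_mul, Real.exp_log (by linarith), Real.rpow_natCast]
  rw [e1, ← Real.exp_add, Real.exp_le_exp]
  have e2 : (k : ℝ) ^ δ = k * (k : ℝ) ^ (δ - 1) := by
    rw [Real.rpow_sub_one hk0.ne']; field_simp
  rw [e2]
  have hp : (0 : ℝ) ≤ (k : ℝ) ^ (δ - 1) := by positivity
  rcases le_total (k : ℝ) R with h | h
  · have := mul_le_mul_of_nonneg_right h hL
    have : 0 ≤ c₂ * (k * (k : ℝ) ^ (δ - 1)) := by positivity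
    linarith
  · have h1 : R ^ (δ - 1) ≤ (k : ℝ) ^ (δ - 1) := Real.rpow_le_rpow hR0 h (by linarith)
    have h2 : R ^ (δ - 1) = Real.log K / c₂ := by
      rw [hR, ← Real.rpow_mul (by positivity), one_div_mul_cancel (by linarith), Real.rpow_one]
    rw [h2, div_le_iff₀ hc2] at h1
    have := mul_le_mul_of_nonneg_left h1 hk0.le
    have : 0 ≤ R * Real.log K := by positivity
    linarith

/-- The quadratic form preserved by the free step `(x, y) ↦ (λ x - y, x)`. -/
def freeForm (lam x y : ℝ) : ℝ := x ^ 2 + y ^ 2 - lam * x * y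

lemma freeForm_step (lam x y : ℝ) : freeForm lam (lam * x - y) x = freeForm lam x y := by
  unfold freeForm; ring

lemma freeForm_lower (lam x y : ℝ) :
    (1 - |lam| / 2) * (x ^ 2 + y ^ 2) ≤ freeForm lam x y := by
  have h1 : lam * x * y ≤ |lam| * (|x| * |y|) := by
    rw [← abs_mul, ← abs_mul, ← mul_assoc]; exact le_abs_self _
  have h2 : |lam| * (2 * (|x| * |y|)) ≤ |lam| * (x ^ 2 + y ^ 2) := by
    apply mul_le_mul_of_nonneg_left _ (abs_nonneg _)
    nlinarith [sq_nonneg (|x| - |y|), sq_abs x, sq_abs y]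
  unfold freeForm; linarith

lemma freeForm_upper (lam x y : ℝ) (hl : |lam| ≤ 2) :
    freeForm lam x y ≤ 2 * (x ^ 2 + y ^ 2) := by
  obtain ⟨h1, h2⟩ := abs_le.1 hl
  unfold freeForm
  nlinarith [mul_nonneg (by linarith : 0 ≤ 2 + lam) (sq_nonneg (x + y)),
    mul_nonneg (by linarith : 0 ≤ 2 - lam) (sq_nonneg (x - y)), sq_nonneg (x + y),
    sq_nonneg (x - y)]

/-- Growth of the form under `diag (1 / p, p)`. -/
lemma freeForm_diag (lam x y p : ℝ) (hl : |lam| < 2) (hp : 0 < p) (hp1 : p < 1) :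
    freeForm lam (x / p) (p * y) ≤ 2 / (1 - |lam| / 2) * (p⁻¹) ^ 2 * freeForm lam x y := by
  have hd : 0 < 1 - |lam| / 2 := by linarith
  have hpi : 1 ≤ p⁻¹ := (one_le_inv₀ hp).2 hp1.le
  have h1 : p ^ 2 ≤ (p⁻¹) ^ 2 := pow_le_pow_left₀ hp.le (by linarith) 2
  have h2 : x ^ 2 + y ^ 2 ≤ freeForm lam x y / (1 - |lam| / 2) := by
    rw [le_div_iff₀ hd, mul_comm]; exact freeForm_lower lam x y
  calc freeForm lam (x / p) (p * y) ≤ 2 * ((x / p) ^ 2 + (p * y) ^ 2) :=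
        freeForm_upper _ _ _ hl.le
    _ = 2 * ((p⁻¹) ^ 2 * x ^ 2 + p ^ 2 * y ^ 2) := by rw [div_eq_mul_inv]; ring
    _ ≤ 2 * ((p⁻¹) ^ 2 * x ^ 2 + (p⁻¹) ^ 2 * y ^ 2) := by gcongr
    _ = 2 * (p⁻¹) ^ 2 * (x ^ 2 + y ^ 2) := by ring
    _ ≤ 2 * (p⁻¹) ^ 2 * (freeForm lam x y / (1 - |lam| / 2)) := by gcongr
    _ = _ := by ring

/-- The sites `s_k = a_k + ω_k` are strictly increasing from `k = 1` on. -/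
lemma site_lt (c γ : ℝ) (ω : ℕ → ℤ)
    (hfloor : ∀ n : ℕ, 1 ≤ n → 2 * n + 1 ≤ ⌊Real.exp (c * (n : ℝ) ^ γ)⌋₊)
    (hω : ∀ j : ℕ, 1 ≤ j → ω j ∈ Finset.Icc (-(j : ℤ)) (j : ℤ)) {i j : ℕ}
    (hi : 1 ≤ i) (hij : i < j) : (aseqG c γ i : ℤ) + ω i < (aseqG c γ j : ℤ) + ω j := by
  induction j, hij using Nat.le_induction with
  | base =>
    have h1 := hfloor (i + 1) (by omega)
    have h2 := Finset.mem_Icc.1 (hω i hi)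
    have h3 := Finset.mem_Icc.1 (hω (i + 1) (by omega))
    simp only [Nat.succ_eq_add_one, aseqG]
    push_cast at *
    omega
  | succ k hk ih =>
    have h1 := hfloor (k + 1) (by omega)
    have h2 := Finset.mem_Icc.1 (hω k (by omega))
    have h3 := Finset.mem_Icc.1 (hω (k + 1) (by omega))
    simp only [aseqG]
    push_cast at *
    omega

/-- The site `s_k` lies at height at least `exp (c k ^ γ) / 4`. -/
lemma exp_le_site (c γ : ℝ) (ω : ℕ → ℤ)
    (hfloor : ∀ n : ℕ, 1 ≤ n → 2 * n + 1 ≤ ⌊Real.exp (c * (n : ℝ) ^ γ)⌋₊)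
    (hω : ∀ j : ℕ, 1 ≤ j → ω j ∈ Finset.Icc (-(j : ℤ)) (j : ℤ)) {k : ℕ} (hk : 1 ≤ k) :
    Real.exp (c * (k : ℝ) ^ γ) ≤ 4 * (((aseqG c γ k : ℤ) + ω k : ℤ) : ℝ) := by
  obtain ⟨m, rfl⟩ : ∃ m, k = m + 1 := ⟨k - 1, by omega⟩
  have h1 := hfloor (m + 1) hk
  have h3 := Finset.mem_Icc.1 (hω (m + 1) hk)
  have h4 := Nat.lt_floor_add_one (Real.exp (c * ((m + 1 : ℕ) : ℝ) ^ γ))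
  have h5 : (⌊Real.exp (c * ((m + 1 : ℕ) : ℝ) ^ γ)⌋₊ : ℤ) + 1
      ≤ 4 * ((aseqG c γ (m + 1) : ℤ) + ω (m + 1)) := by
    simp only [aseqG]
    push_cast at *
    omega
  have h6 : ((⌊Real.exp (c * ((m + 1 : ℕ) : ℝ) ^ γ)⌋₊ : ℝ)) + 1
      ≤ 4 * (((aseqG c γ (m + 1) : ℤ) + ω (m + 1) : ℤ) : ℝ) := by exact_mod_cast h5
  linarith

/-- The sites are pairwise distinct, so the coupling at `s_k` is `q_k`. -/
lemma pcoefQ_site (q : ℕ → ℝ) (c γ : ℝ) (ω : ℕ → ℤ)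
    (hfloor : ∀ n : ℕ, 1 ≤ n → 2 * n + 1 ≤ ⌊Real.exp (c * (n : ℝ) ^ γ)⌋₊)
    (hω : ∀ j : ℕ, 1 ≤ j → ω j ∈ Finset.Icc (-(j : ℤ)) (j : ℤ)) {k : ℕ} (hk : 1 ≤ k) :
    pcoefQ q c γ ω ((aseqG c γ k : ℤ) + ω k) = q k := by
  have h : ∃ j : ℕ, 1 ≤ j ∧ (aseqG c γ k : ℤ) + ω k = (aseqG c γ j : ℤ) + ω j := ⟨k, hk, rfl⟩
  unfold pcoefQ
  rw [dif_pos h]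
  obtain ⟨h1, h2⟩ := h.choose_spec
  congr 1
  rcases lt_trichotomy h.choose k with h3 | h3 | h3
  · have := site_lt c γ ω hfloor hω h1 h3
    omega
  · exact h3
  · have := site_lt c γ ω hfloor hω hk h3
    omega

lemma pcoefQ_between (q : ℕ → ℝ) (c γ : ℝ) (ω : ℕ → ℤ)
    (hfloor : ∀ n : ℕ, 1 ≤ n → 2 * n + 1 ≤ ⌊Real.exp (c * (n : ℝ) ^ γ)⌋₊)
    (hω : ∀ j : ℕ, 1 ≤ j → ω j ∈ Finset.Icc (-(j : ℤ)) (j : ℤ)) {k : ℕ} {n : ℤ}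
    (h1 : 1 ≤ k → (aseqG c γ k : ℤ) + ω k < n)
    (h2 : n < (aseqG c γ (k + 1) : ℤ) + ω (k + 1)) :
    pcoefQ q c γ ω n = 1 := by
  unfold pcoefQ
  rw [dif_neg]
  rintro ⟨j, hj, rfl⟩
  rcases lt_trichotomy j k with h3 | rfl | h3
  · have := site_lt c γ ω hfloor hω hj h3
    have := h1 (by omega)
    omega
  · have := h1 hj
    omega
  · rcases eq_or_lt_of_le (Nat.succ_le_of_lt h3) with h4 | h4
    · subst h4; simp at h2
    · have := site_lt c γ ω hfloor hω (by omega) h4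
      simp only [Nat.succ_eq_add_one] at this
      omega

lemma TmatQ_succ_zero (q : ℕ → ℝ) (c γ : ℝ) (ω : ℕ → ℤ) (lam : ℝ) (n : ℕ) (j : Fin 2) :
    TmatQ q c γ ω lam (n + 1) 0 j = (lam * TmatQ q c γ ω lam n 0 j
      - pcoefQ q c γ ω n * TmatQ q c γ ω lam n 1 j) / pcoefQ q c γ ω ((n + 1 : ℕ) : ℤ) := by
  have : (((n + 1 : ℕ) : ℤ) - 1) = n := by push_cast; ring
  simp only [TmatQ, TstepQ, Matrix.mul_apply, Fin.sum_univ_two, this]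
  simp
  ring

lemma TmatQ_succ_one (q : ℕ → ℝ) (c γ : ℝ) (ω : ℕ → ℤ) (lam : ℝ) (n : ℕ) (j : Fin 2) :
    TmatQ q c γ ω lam (n + 1) 1 j = TmatQ q c γ ω lam n 0 j := by
  simp [TmatQ, TstepQ, Matrix.mul_apply, Fin.sum_univ_two]

/-- With `k` sites at or below `n`, the form of the column `(T(n)₀ⱼ, p_n T(n)₁ⱼ)` is at most
`K ^ k ∏_{i ≤ k} q_i⁻²`. -/
lemma freeForm_TmatQ_le (q : ℕ → ℝ) (c γ : ℝ) (ω : ℕ → ℤ) (lam : ℝ) (hl : |lam| < 2)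
    (hq01 : ∀ k : ℕ, 1 ≤ k → q k ∈ Set.Ioo (0 : ℝ) 1)
    (hfloor : ∀ n : ℕ, 1 ≤ n → 2 * n + 1 ≤ ⌊Real.exp (c * (n : ℝ) ^ γ)⌋₊)
    (hω : ∀ j : ℕ, 1 ≤ j → ω j ∈ Finset.Icc (-(j : ℤ)) (j : ℤ)) (j : Fin 2) (n : ℕ) :
    ∃ k : ℕ, (1 ≤ k → (aseqG c γ k : ℤ) + ω k ≤ n) ∧
      (n : ℤ) < (aseqG c γ (k + 1) : ℤ) + ω (k + 1) ∧
      freeForm lam (TmatQ q c γ ω lam n 0 j) (pcoefQ q c γ ω n * TmatQ q c γ ω lam n 1 j) ≤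
        (2 / (1 - |lam| / 2)) ^ k * ∏ i ∈ Finset.Icc 1 k, ((q i)⁻¹) ^ 2 := by
  induction n with
  | zero =>
    have h0 : (0 : ℤ) < (aseqG c γ (0 + 1) : ℤ) + ω (0 + 1) := by
      have h1 := hfloor 1 le_rfl
      have h3 := Finset.mem_Icc.1 (hω 1 le_rfl)
      simp only [aseqG]
      push_cast at *
      simp only [zero_add]
      omega
    refine ⟨0, by simp, by exact_mod_cast h0, ?_⟩
    have e0 : pcoefQ q c γ ω 0 = 1 :=
      pcoefQ_between q c γ ω hfloor hω (k := 0) (by simp) h0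
    have e1 : pcoefQ q c γ ω (-1) = 1 :=
      pcoefQ_between q c γ ω hfloor hω (k := 0) (by simp) (by omega)
    fin_cases j <;> simp [TmatQ, TstepQ, e0, e1, freeForm] <;> nlinarith
  | succ n ih =>
    obtain ⟨k, h1, h2, h3⟩ := ih
    have hK : 0 < 2 / (1 - |lam| / 2) := by
      have : 0 < 1 - |lam| / 2 := by linarith
      positivity
    rcases eq_or_lt_of_le (Int.add_one_le_iff.2 h2) with h4 | h4
    · refine ⟨k + 1, fun _ => by push_cast; omega, ?_, ?_⟩
      · have := site_lt c γ ω hfloor hω (i := k + 1) (j := k + 1 + 1) (by omega) (by omega)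
        push_cast; omega
      · have e : pcoefQ q c γ ω ((n + 1 : ℕ) : ℤ) = q (k + 1) := by
          have : ((n + 1 : ℕ) : ℤ) = (aseqG c γ (k + 1) : ℤ) + ω (k + 1) := by
            push_cast; omega
          rw [this, pcoefQ_site q c γ ω hfloor hω (by omega)]
        obtain ⟨hq0, hq1⟩ := hq01 (k + 1) (by omega)
        rw [TmatQ_succ_zero, TmatQ_succ_one, e]
        refine (freeForm_diag lam _ _ _ hl hq0 hq1).trans ?_
        rw [freeForm_step, Finset.prod_Icc_succ_top (by omega)]
        calc _ ≤ 2 / (1 - |lam| / 2) * (q (k + 1))⁻¹ ^ 2 *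
              ((2 / (1 - |lam| / 2)) ^ k * ∏ i ∈ Finset.Icc 1 k, ((q i)⁻¹) ^ 2) := by gcongr
          _ = _ := by ring
    · refine ⟨k, fun hk => by have := h1 hk; push_cast; omega, by push_cast; omega, ?_⟩
      have e : pcoefQ q c γ ω ((n + 1 : ℕ) : ℤ) = 1 :=
        pcoefQ_between q c γ ω hfloor hω (k := k)
          (fun hk => by have := h1 hk; push_cast; omega) (by push_cast; omega)
      rw [TmatQ_succ_zero, TmatQ_succ_one, e, div_one, one_mul, freeForm_step]
      exact h3

/-- Super-exponential sparseness with decaying couplings: for every `φ ∈ (0,π)`,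
`λ = 2 cos φ` and every admissible `ω`,
`limsup_{l→∞} (1/l²) ∑_{n=0}^{l} ‖T(n;λ)‖² < ∞`. -/
theorem statement17 (c γ δ c₁ c₂ φ : ℝ) (q : ℕ → ℝ)
    (hc : 0 < c) (hγδ : γ > δ) (hδ : δ > 1) (hδγ : δ > γ - 1)
    (hc12 : c₁ ≥ c₂) (hc2 : c₂ > 0)
    (hq01 : ∀ k : ℕ, 1 ≤ k → q k ∈ Set.Ioo (0 : ℝ) 1)
    (hqlow : ∀ n : ℕ, 1 ≤ n →
      Real.exp (c * (n : ℝ) ^ γ - c₁ * (n : ℝ) ^ δ) ≤ ∏ k ∈ Finset.Icc 1 n, ((q k)⁻¹) ^ 2)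
    (hqhigh : ∀ n : ℕ, 1 ≤ n →
      (∏ k ∈ Finset.Icc 1 n, ((q k)⁻¹) ^ 2) ≤ Real.exp (c * (n : ℝ) ^ γ - c₂ * (n : ℝ) ^ δ))
    (hfloor : ∀ n : ℕ, 1 ≤ n → 2 * n + 1 ≤ ⌊Real.exp (c * (n : ℝ) ^ γ)⌋₊)
    (hφ : φ ∈ Set.Ioo 0 π) (lam : ℝ) (hlam : lam = 2 * Real.cos φ)
    (ω : ℕ → ℤ) (hω : ∀ j : ℕ, 1 ≤ j → ω j ∈ Finset.Icc (-(j : ℤ)) (j : ℤ)) :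
    Filter.limsup
      (fun l : ℕ => ENNReal.ofReal
        ((1 / (l : ℝ) ^ 2) * ∑ n ∈ Finset.range (l + 1), opNorm (TmatQ q c γ ω lam n) ^ 2))
      atTop < ⊤ := by
  have hl : |lam| < 2 := by
    have hs : 0 < Real.sin φ := Real.sin_pos_of_mem_Ioo hφ
    have h1 := Real.sin_sq_add_cos_sq φ
    rw [abs_lt, hlam]
    constructor <;> nlinarith [sq_nonneg (Real.cos φ), mul_pos hs hs]
  have hd : 0 < 1 - |lam| / 2 := by linarith
  have hK : 1 ≤ 2 / (1 - |lam| / 2) := by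
    rw [le_div_iff₀ hd]; linarith [abs_nonneg lam]
  obtain ⟨M, hM1, hM⟩ := pow_mul_exp_bounded _ c₂ δ hK hc2 hδ
  have hform : ∀ (j : Fin 2) (n : ℕ), freeForm lam (TmatQ q c γ ω lam n 0 j)
      (pcoefQ q c γ ω n * TmatQ q c γ ω lam n 1 j) ≤ 4 * M * ((n : ℝ) + 1) := by
    intro j n
    obtain ⟨k, h1, -, h3⟩ := freeForm_TmatQ_le q c γ ω lam hl hq01 hfloor hω j n
    refine h3.trans ?_
    have hn : (0 : ℝ) ≤ n := Nat.cast_nonneg n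
    rcases Nat.eq_zero_or_pos k with rfl | hk
    · simp
      nlinarith
    · have h4 := exp_le_site c γ ω hfloor hω hk
      have h5 : ((((aseqG c γ k : ℤ) + ω k : ℤ)) : ℝ) ≤ n := by exact_mod_cast h1 hk
      calc _ ≤ (2 / (1 - |lam| / 2)) ^ k
              * Real.exp (c * (k : ℝ) ^ γ - c₂ * (k : ℝ) ^ δ) := by
            gcongr; exact hqhigh k hk
        _ = (2 / (1 - |lam| / 2)) ^ k * Real.exp (-(c₂ * (k : ℝ) ^ δ))
              * Real.exp (c * (k : ℝ) ^ γ) := by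
            rw [mul_assoc, ← Real.exp_add]; congr 2; ring
        _ ≤ M * (4 * ((n : ℝ) + 1)) := by
            apply mul_le_mul (hM k hk) (by linarith) (Real.exp_nonneg _) (by linarith)
        _ = _ := by ring
  set B : ℝ := 4 * M / (1 - |lam| / 2) with hB
  have hB0 : 0 ≤ B := by positivity
  have htop : ∀ (j : Fin 2) (n : ℕ), TmatQ q c γ ω lam n 0 j ^ 2 ≤ B * ((n : ℝ) + 1) := by
    intro j n
    have h1 := freeForm_lower lam (TmatQ q c γ ω lam n 0 j)
      (pcoefQ q c γ ω n * TmatQ q c γ ω lam n 1 j)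
    have h2 := hform j n
    have h3 : 0 ≤ (1 - |lam| / 2) * (pcoefQ q c γ ω n * TmatQ q c γ ω lam n 1 j) ^ 2 := by
      positivity
    rw [hB, div_mul_eq_mul_div, le_div_iff₀ hd]
    linarith
  -- The second row of `T(n)` is the first row of `T(n - 1)`; for `n = 0` it is `(1, 0)`.
  have hbot : ∀ (j : Fin 2) (n : ℕ), TmatQ q c γ ω lam n 1 j ^ 2 ≤ (B + 1) * ((n : ℝ) + 1) := by
    intro j n
    cases n with
    | zero => fin_cases j <;> simp [TmatQ, TstepQ] <;> linarith
    | succ n =>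
      rw [TmatQ_succ_one]
      have hn : (0 : ℝ) ≤ n := Nat.cast_nonneg n
      refine (htop j n).trans ?_
      push_cast
      nlinarith
  have hnorm : ∀ n : ℕ, opNorm (TmatQ q c γ ω lam n) ^ 2 ≤ (4 * B + 2) * ((n : ℝ) + 1) := by
    intro n
    have := opNorm_sq_le (TmatQ q c γ ω lam n)
    linarith [htop 0 n, htop 1 n, hbot 0 n, hbot 1 n]
  have hlim : Filter.limsup
      (fun l : ℕ => ENNReal.ofReal
        ((1 / (l : ℝ) ^ 2) * ∑ n ∈ Finset.range (l + 1), opNorm (TmatQ q c γ ω lam n) ^ 2))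
      atTop ≤ ENNReal.ofReal (4 * (4 * B + 2)) := by
    refine Filter.limsup_le_of_le (by isBoundedDefault) ?_
    filter_upwards [eventually_ge_atTop 1] with l hl1
    apply ENNReal.ofReal_le_ofReal
    have hl0 : (1 : ℝ) ≤ l := by exact_mod_cast hl1
    rw [one_div, inv_mul_le_iff₀ (by positivity)]
    calc ∑ n ∈ Finset.range (l + 1), opNorm (TmatQ q c γ ω lam n) ^ 2
        ≤ ∑ _n ∈ Finset.range (l + 1), (4 * B + 2) * ((l : ℝ) + 1) := by
          refine Finset.sum_le_sum fun n hn => (hnorm n).trans ?_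
          have : (n : ℝ) ≤ l := by exact_mod_cast Nat.lt_succ_iff.1 (Finset.mem_range.1 hn)
          gcongr
      _ = (4 * B + 2) * ((l : ℝ) + 1) ^ 2 := by
          rw [Finset.sum_const, Finset.card_range, nsmul_eq_mul]; push_cast; ring
      _ ≤ (4 * B + 2) * (2 * (l : ℝ)) ^ 2 := by gcongr; linarith
      _ = _ := by ring
  exact hlim.trans_lt ENNReal.ofReal_lt_top
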